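/- arXiv:2301.02155 — 4 statements merged into one kernel-verified Lean document; each statement's English description precedes it below -/
import Mathlib

section
/- The pair (1/4 + (3/4)·log₂ 3, 3/4) belongs to the achievable storage-retrieval rate region R of the (2,2) PIR problem. -/
open scoped BigOperators

namespace PIR

/-- Messages are length-`L` vectors over `F_2`. -/
abbrev Msg (L : ℕ) := Fin L → ZMod 2

/-- A (2,2) PIR code (without the correctness condition) with message length `L`
and query alphabet `Q`.  The two messages are independent and uniform on `F_2^L`;
the queries are independent of the messages (built into the model: the query
distribution `P k` for desired message `k` does not depend on the messages). -/
structure CodeBase (L : ℕ) (Q : Type) [Fintype Q] [DecidableEq Q] where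
  /-- query distribution for desired message index `k` -/
  P : Fin 2 → Q × Q → ℝ
  P_nonneg : ∀ k qq, 0 ≤ P k qq
  P_sum : ∀ k, ∑ qq : Q × Q, P k qq = 1
  /-- number of stored `F_2` symbols at database `n` -/
  stor : Fin 2 → ℕ
  /-- storage encoders -/
  phi : (n : Fin 2) → Msg L × Msg L → (Fin (stor n) → ZMod 2)
  /-- answer lengths -/
  blen : Fin 2 → Q → ℕ
  /-- deterministic answer functions -/
  ans : (n : Fin 2) → (q : Q) → (Fin (stor n) → ZMod 2) → (Fin (blen n q) → ZMod 2)
  /-- decoding functions -/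
  dec : (k : Fin 2) → (q₁ q₂ : Q) → (Fin (blen 0 q₁) → ZMod 2) →
      (Fin (blen 1 q₂) → ZMod 2) → Msg L
  /-- Privacy: for each database `n`, the joint distribution of
  `(Q_n^{[k]}, A_n^{[k]}, S_n)` is the same for `k = 1, 2`.  Since the answer
  `A_n` is the fixed deterministic function `ans` of `(Q_n, S_n)` (not
  depending on `k`), this is expressed as equality of the joint distributions of
  `(Q_n, S_n)` (messages uniform, queries independent of messages). -/
  privacy : ∀ (n : Fin 2) (q : Q) (s : Fin (stor n) → ZMod 2),
    (∑ qq : Q × Q, if (if n = 0 then qq.1 else qq.2) = q then P 0 qq else 0) *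
      ((Finset.univ.filter (fun w : Msg L × Msg L => phi n w = s)).card : ℝ) =
    (∑ qq : Q × Q, if (if n = 0 then qq.1 else qq.2) = q then P 1 qq else 0) *
      ((Finset.univ.filter (fun w : Msg L × Msg L => phi n w = s)).card : ℝ)

variable {L : ℕ} {Q : Type} [Fintype Q] [DecidableEq Q]

/-- The desired message `W_k`. -/
def target (k : Fin 2) (w : Msg L × Msg L) : Msg L := if k = 0 then w.1 else w.2

/-- The decoder output `Ŵ_k` when the realized queries are `qq` and the messages `w`. -/
def retrieved (C : CodeBase L Q) (k : Fin 2) (qq : Q × Q) (w : Msg L × Msg L) : Msg L :=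
  C.dec k qq.1 qq.2 (C.ans 0 qq.1 (C.phi 0 w)) (C.ans 1 qq.2 (C.phi 1 w))

/-- Zero-error correctness: `Ŵ_k = W_k` for all realizations. -/
def IsZeroError (C : CodeBase L Q) : Prop :=
  ∀ (k : Fin 2) (w : Msg L × Msg L) (qq : Q × Q), C.P k qq ≠ 0 →
    retrieved C k qq w = target k w

/-- The average probability of error `P_e`. -/
noncomputable def Pe (C : CodeBase L Q) : ℝ :=
  (1/2) * ∑ k : Fin 2, ∑ w : Msg L × Msg L, ∑ qq : Q × Q,
    ((2:ℝ)^(2*L))⁻¹ * C.P k qq * (if retrieved C k qq w ≠ target k w then 1 else 0)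

/-- The retrieval rate `β_n = E[β_n^{(Q_n)}]` (the marginal of `Q_n` is the same
for `k=1,2` by privacy; we use `k=1`, i.e. index `0`). -/
noncomputable def betaRate (C : CodeBase L Q) (n : Fin 2) : ℝ :=
  ∑ qq : Q × Q, C.P 0 qq * (C.blen n (if n = 0 then qq.1 else qq.2) : ℝ)

/-- A linear PIR code: storage encoders and answer functions are `F_2`-linear. -/
def IsLinear (C : CodeBase L Q) : Prop :=
  (∀ n : Fin 2, IsLinearMap (ZMod 2) (C.phi n)) ∧
  (∀ (n : Fin 2) (q : Q), IsLinearMap (ZMod 2) (C.ans n q))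

/-- A bundled PIR code (with its query alphabet). -/
structure Code (L : ℕ) where
  Q : Type
  [fQ : Fintype Q]
  [dQ : DecidableEq Q]
  base : CodeBase L Q

attribute [instance] Code.fQ Code.dQ

/-- A normalized storage-retrieval pair `(ᾱ, β̄)` is achievable. -/
def Achievable (ab : ℝ × ℝ) : Prop :=
  ∀ ε > (0:ℝ), ∃ L₀ : ℕ, ∀ L ≥ L₀, ∃ C : Code L,
    IsZeroError C.base ∧
    ((C.base.stor 0 + C.base.stor 1 : ℕ) : ℝ) / 2 ≤ L * (ab.1 + ε) ∧
    (betaRate C.base 0 + betaRate C.base 1) / 2 ≤ L * (ab.2 + ε)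

/-- Achievability by linear codes. -/
def LinAchievable (ab : ℝ × ℝ) : Prop :=
  ∀ ε > (0:ℝ), ∃ L₀ : ℕ, ∀ L ≥ L₀, ∃ C : Code L,
    IsZeroError C.base ∧ IsLinear C.base ∧
    ((C.base.stor 0 + C.base.stor 1 : ℕ) : ℝ) / 2 ≤ L * (ab.1 + ε) ∧
    (betaRate C.base 0 + betaRate C.base 1) / 2 ≤ L * (ab.2 + ε)

/-- The achievable storage-retrieval rate region `R`. -/
def Region : Set (ℝ × ℝ) := { ab | Achievable ab }

/-- The query distribution used for the `(2,2)` PIR system: for message 1,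
uniform on `{(1,1),(2,2)}`; for message 2, uniform on `{(1,2),(2,1)}`. -/
noncomputable def stdP : Fin 2 → Fin 2 × Fin 2 → ℝ :=
  fun k qq => if (k = 0 ∧ qq.1 = qq.2) ∨ (k = 1 ∧ qq.1 ≠ qq.2) then 1/2 else 0

/-! Read the two messages as the indicator words of a pair of subsets of `4m` positions. The pair
cuts the positions into the cells `agreeSet q` and `differSet r`, and the cells `agreeSet q` and
`differSet r` together form a level set of the first message if `q = r` and of the second one if
`q ≠ r`. So it suffices that server 1 returns `agreeSet q` and server 2 returns `differSet r`.

A uniformly random shift of the pair makes all four cells have `m` elements with probability at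
least `1 / (16 m³)`. Given `agreeSet q`, the cell `differSet r` is then one of `C(3m, m)` sets, so
a random hash function with `8 C(3m, m)` values determines it with probability at least `1 / 2`, for
all `q` and `r` simultaneously. Hence some list of `O(m⁴)` shifts and hash functions serves all
`2 ^ (8m)` pairs, and the index into the list costs only `O(log m)` bits. With it, an answer of
server 1 takes `log C(4m, m)` bits and its storage `log C(4m, m) + log C(3m, m)` bits, whereas the
hash values on server 2 take `log C(3m, m)` bits each. The binomial coefficients are estimated by
`log₂ C(4m, m) ≤ m (8 - 3 log₂ 3)` and `log₂ C(3m, m) ≤ m (3 log₂ 3 - 2)`. -/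

open Finset Function Filter Asymptotics
open scoped symmDiff

section Counting

variable {α β : Type*} [Fintype β]

lemma card_forall_not_le_mul_exp_neg (p : β → Prop) [DecidablePred p] {n : ℕ} (hn : 0 < n)
    (hp : Fintype.card β ≤ n * #{b | p b}) (k : ℕ) :
    (#{l : Fin (n * k) → β | ∀ t, ¬ p (l t)} : ℝ) ≤
      (Fintype.card β : ℝ) ^ (n * k) * Real.exp (-k) := by
  have hpow : #{l : Fin (n * k) → β | ∀ t, ¬ p (l t)} = #{b | ¬ p b} ^ (n * k) := by
    rw [← Fintype.card_subtype, ← Fintype.card_subtype,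
      Fintype.card_congr (Equiv.subtypePiEquivPi (p := fun _ b => ¬ p b))]
    simp
  have hnot : (#{b | ¬ p b} : ℝ) ≤ Fintype.card β * (1 - 1 / n) := by
    have hsplit : (#{b | p b} : ℝ) + #{b | ¬ p b} = Fintype.card β := by
      exact_mod_cast card_filter_add_card_filter_not p
    have hdiv : (Fintype.card β : ℝ) / n ≤ #{b | p b} := by
      rw [div_le_iff₀' (by exact_mod_cast hn)]
      exact_mod_cast hp
    rw [mul_one_sub, mul_one_div]
    linarith
  have hexp : (1 - 1 / (n : ℝ)) ^ n ≤ Real.exp (-1) :=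
    Real.one_sub_div_pow_le_exp_neg (by exact_mod_cast hn)
  have hbase : 0 ≤ 1 - 1 / (n : ℝ) := sub_nonneg.2 (by simpa using Nat.cast_inv_le_one n)
  calc (#{l : Fin (n * k) → β | ∀ t, ¬ p (l t)} : ℝ)
      = (#{b | ¬ p b} : ℝ) ^ (n * k) := by rw [hpow]; push_cast; rfl
    _ ≤ (Fintype.card β * (1 - 1 / (n : ℝ))) ^ (n * k) := by gcongr
    _ = (Fintype.card β : ℝ) ^ (n * k) * ((1 - 1 / (n : ℝ)) ^ n) ^ k := by
      rw [mul_pow, ← pow_mul]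
    _ ≤ (Fintype.card β : ℝ) ^ (n * k) * Real.exp (-1) ^ k := by gcongr
    _ = (Fintype.card β : ℝ) ^ (n * k) * Real.exp (-k) := by
      rw [← Real.exp_nat_mul, mul_neg_one]

theorem exists_list_forall_exists_rel [Fintype α] [Nonempty β] (R : α → β → Prop)
    [∀ a, DecidablePred (R a)] {n k : ℕ} (hR : ∀ a, Fintype.card β ≤ n * #{b | R a b})
    (hα : Fintype.card α < Real.exp k) :
    ∃ l : Fin (n * k) → β, ∀ a, ∃ t, R a (l t) := by
  classical
  by_contra! hbad
  have hn : 0 < n := by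
    obtain ⟨a, -⟩ := hbad fun _ => Classical.arbitrary β
    exact Nat.pos_of_mul_pos_right (Fintype.card_pos.trans_le (hR a))
  have hunion : Fintype.card β ^ (n * k) ≤
      ∑ a, #{l : Fin (n * k) → β | ∀ t, ¬ R a (l t)} := by
    have hcover : (univ : Finset (Fin (n * k) → β)) ⊆
        univ.biUnion fun a => {l : Fin (n * k) → β | ∀ t, ¬ R a (l t)} := fun l _ => by
      simpa using hbad l
    simpa using (card_le_card hcover).trans card_biUnion_le
  have : (0 : ℝ) < (Fintype.card β : ℝ) ^ (n * k) :=
    pow_pos (by exact_mod_cast Fintype.card_pos) _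
  have hlt : (Fintype.card β : ℝ) ^ (n * k) < (Fintype.card β : ℝ) ^ (n * k) :=
    calc (Fintype.card β : ℝ) ^ (n * k)
        ≤ ∑ a, (#{l : Fin (n * k) → β | ∀ t, ¬ R a (l t)} : ℝ) := by exact_mod_cast hunion
      _ ≤ ∑ _a : α, (Fintype.card β : ℝ) ^ (n * k) * Real.exp (-k) :=
        sum_le_sum fun a _ => card_forall_not_le_mul_exp_neg (R a) hn (hR a) k
      _ = (Fintype.card β : ℝ) ^ (n * k) * (Fintype.card α * Real.exp (-k)) := by
        rw [sum_const, card_univ, nsmul_eq_mul]; ring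
      _ < (Fintype.card β : ℝ) ^ (n * k) * (Real.exp k * Real.exp (-k)) := by gcongr
      _ = (Fintype.card β : ℝ) ^ (n * k) := by rw [← Real.exp_add]; simp
  exact hlt.false

variable [Fintype α] [DecidableEq α] [DecidableEq β]

lemma card_apply_eq_apply_mul_card {a b : α} (hab : a ≠ b) :
    #{h : α → β | h a = h b} * Fintype.card β = Fintype.card (α → β) := by
  rw [← card_univ (α := β), ← card_product, ← card_univ]
  refine card_nbij' (fun x => update x.1 a x.2) (fun h => (update h a (h b), h a)) ?_ ?_ ?_ ?_
  · simp
  · intro h _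
    simp [hab.symm]
  · rintro ⟨h, c⟩ hh
    have hh : h a = h b := by simpa using hh
    simp [hab.symm, ← hh]
  · intro h _
    simp

lemma card_exists_apply_eq_apply_mul_card_le (s : Finset α) (a : α) :
    #{h : α → β | ∃ y ∈ s, y ≠ a ∧ h y = h a} * Fintype.card β ≤
      #s * Fintype.card (α → β) := by
  have hunion : ({h : α → β | ∃ y ∈ s, y ≠ a ∧ h y = h a} : Finset _) ⊆
      (s.erase a).biUnion fun y => {h : α → β | h y = h a} := fun h => by
    simp only [mem_filter_univ, mem_biUnion, mem_erase]
    tauto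
  calc #{h : α → β | ∃ y ∈ s, y ≠ a ∧ h y = h a} * Fintype.card β
      ≤ (∑ y ∈ s.erase a, #{h : α → β | h y = h a}) * Fintype.card β := by
        gcongr
        exact (card_le_card hunion).trans card_biUnion_le
    _ = ∑ _y ∈ s.erase a, Fintype.card (α → β) := by
        rw [sum_mul]
        exact sum_congr rfl fun _ hy => card_apply_eq_apply_mul_card (ne_of_mem_erase hy)
    _ ≤ #s * Fintype.card (α → β) := by
        rw [sum_const, smul_eq_mul]
        gcongr
        exact erase_subset a s

lemma card_filter_card_inter_eq (A : Finset α) (k l : ℕ) :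
    #{B : Finset α | #(A ∩ B) = k ∧ #(Aᶜ ∩ B) = l} = (#A).choose k * (#Aᶜ).choose l := by
  have inter_union : ∀ C ⊆ A, ∀ D ⊆ Aᶜ, A ∩ (C ∪ D) = C ∧ Aᶜ ∩ (C ∪ D) = D := by
    intro C hC D hD
    constructor <;> grind [mem_compl]
  rw [← card_powersetCard, ← card_powersetCard, ← card_product]
  refine card_nbij' (fun B => (A ∩ B, Aᶜ ∩ B)) (fun x => x.1 ∪ x.2) ?_ ?_ ?_ ?_
  · intro B hB
    simpa [mem_powersetCard] using hB
  · rintro ⟨C, D⟩ h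
    simp only [coe_product, Set.mem_prod, mem_coe, mem_powersetCard] at h
    obtain ⟨⟨hC, hk⟩, hD, hl⟩ := h
    simp [inter_union C hC D hD, hk, hl]
  · intro B _
    grind [mem_compl]
  · rintro ⟨C, D⟩ h
    simp only [coe_product, Set.mem_prod, mem_coe, mem_powersetCard] at h
    exact Prod.ext_iff.2 (inter_union C h.1.1 D h.2.1)

end Counting

section SetPairs

variable {ι : Type*} [Fintype ι] [DecidableEq ι]

/-- The positions at which the indicator word of `A` has the letter `q`. -/
def levelSet (q : Fin 2) (A : Finset ι) : Finset ι := if q = 0 then Aᶜ else A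

/-- The positions at which both indicator words of the pair `p` have the letter `q`. -/
def agreeSet (q : Fin 2) (p : Finset ι × Finset ι) : Finset ι :=
  levelSet q p.1 ∩ levelSet q p.2

/-- The positions at which the indicator words of the pair `p` differ, the first having the
letter `q`. -/
def differSet (q : Fin 2) (p : Finset ι × Finset ι) : Finset ι :=
  levelSet q p.1 \ levelSet q p.2

lemma levelSet_injective (q : Fin 2) : Injective (levelSet (ι := ι) q) := by
  unfold levelSet
  split_ifs
  exacts [compl_injective, injective_id]

lemma levelSet_of_ne {q r : Fin 2} (hqr : q ≠ r) (A : Finset ι) :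
    levelSet r A = (levelSet q A)ᶜ := by
  fin_cases q <;> fin_cases r <;> simp_all [levelSet]

lemma differSet_union_agreeSet (q : Fin 2) (p : Finset ι × Finset ι) :
    differSet q p ∪ agreeSet q p = levelSet q p.1 :=
  sdiff_union_inter _ _

lemma differSet_of_ne {q r : Fin 2} (hqr : q ≠ r) (p : Finset ι × Finset ι) :
    differSet r p = levelSet q p.2 \ levelSet q p.1 := by
  rw [differSet, levelSet_of_ne hqr, levelSet_of_ne hqr, compl_sdiff_compl]

lemma differSet_union_agreeSet_of_ne {q r : Fin 2} (hqr : q ≠ r) (p : Finset ι × Finset ι) :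
    differSet r p ∪ agreeSet q p = levelSet q p.2 := by
  rw [differSet_of_ne hqr, agreeSet, inter_comm, sdiff_union_inter]

lemma disjoint_differSet_agreeSet (q r : Fin 2) (p : Finset ι × Finset ι) :
    Disjoint (differSet r p) (agreeSet q p) := by
  obtain rfl | hqr := eq_or_ne q r
  · exact disjoint_sdiff_inter _ _
  · rw [differSet_of_ne hqr, agreeSet, inter_comm]
    exact disjoint_sdiff_inter _ _

lemma disjoint_agreeSet {q r : Fin 2} (hqr : q ≠ r) (p : Finset ι × Finset ι) :
    Disjoint (agreeSet r p) (agreeSet q p) := by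
  rw [agreeSet, levelSet_of_ne hqr]
  exact disjoint_compl_left.mono inter_subset_left inter_subset_left

/-- A pair of sets is `m`-balanced if each of its four cells (both, neither, exactly the first,
exactly the second) has `m` elements. -/
def IsBalanced (m : ℕ) (p : Finset ι × Finset ι) : Prop :=
  ∀ q, #(agreeSet q p) = m ∧ #(differSet q p) = m

/-- The hash function `h` isolates the pair `p` if every cell `differSet r p` can be recovered from
its size and its hash value once some cell `agreeSet q p`, which it avoids, is known. -/
def Isolates {κ : Type*} (h : Finset ι → κ) (p : Finset ι × Finset ι) : Prop :=
  ∀ q r y, Disjoint y (agreeSet q p) → #y = #(differSet r p) →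
    h y = h (differSet r p) → y = differSet r p

lemma Isolates.differSet_eq {κ : Type*} {h : Finset ι → κ} {p p' : Finset ι × Finset ι}
    (hp : Isolates h p) {q r : Fin 2} (hagree : agreeSet q p = agreeSet q p')
    (hcard : #(differSet r p) = #(differSet r p'))
    (hhash : h (differSet r p) = h (differSet r p')) :
    differSet r p = differSet r p' :=
  (hp q r _ (hagree ▸ disjoint_differSet_agreeSet q r p') hcard.symm hhash.symm).symm

section Hashing

variable {κ : Type*} [Fintype κ] {m : ℕ} {p : Finset ι × Finset ι}

open Classical in
lemma card_not_isolates_mul_card_le (hp : IsBalanced m p) :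
    #{h : Finset ι → κ | ¬ Isolates h p} * Fintype.card κ ≤
      4 * (Fintype.card ι - m).choose m * Fintype.card (Finset ι → κ) := by
  let collisions (z : Fin 2 × Fin 2) : Finset (Finset ι → κ) :=
    {h | ∃ y ∈ powersetCard m (agreeSet z.1 p)ᶜ,
      y ≠ differSet z.2 p ∧ h y = h (differSet z.2 p)}
  have hunion : ({h : Finset ι → κ | ¬ Isolates h p} : Finset _) ⊆ univ.biUnion collisions := by
    intro h hh
    simp only [mem_filter_univ, Isolates, not_forall] at hh
    obtain ⟨q, r, y, hy, hcard, hhash, hne⟩ := hh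
    simp only [collisions, mem_biUnion, mem_univ, true_and, mem_filter, mem_powersetCard]
    exact ⟨(q, r), y, ⟨subset_compl_iff_disjoint_right.2 hy, hcard.trans (hp r).2⟩, hne, hhash⟩
  have hcollisions (z : Fin 2 × Fin 2) : #(collisions z) * Fintype.card κ ≤
      (Fintype.card ι - m).choose m * Fintype.card (Finset ι → κ) := by
    have := card_exists_apply_eq_apply_mul_card_le (β := κ)
      (powersetCard m (agreeSet z.1 p)ᶜ) (differSet z.2 p)
    rwa [card_powersetCard, card_compl, (hp z.1).1] at this
  calc #{h : Finset ι → κ | ¬ Isolates h p} * Fintype.card κ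
      ≤ (∑ z, #(collisions z)) * Fintype.card κ := by
        gcongr
        exact (card_le_card hunion).trans card_biUnion_le
    _ ≤ ∑ _z : Fin 2 × Fin 2,
          (Fintype.card ι - m).choose m * Fintype.card (Finset ι → κ) := by
        rw [sum_mul]
        exact sum_le_sum fun z _ => hcollisions z
    _ = 4 * (Fintype.card ι - m).choose m * Fintype.card (Finset ι → κ) := by
        simp [mul_assoc]

open Classical in
lemma card_le_two_mul_card_isolates (hp : IsBalanced m p)
    (hκ : Fintype.card κ = 8 * (Fintype.card ι - m).choose m) (hpos : 0 < Fintype.card κ) :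
    Fintype.card (Finset ι → κ) ≤ 2 * #{h : Finset ι → κ | Isolates h p} := by
  have hsplit := card_filter_add_card_filter_not (s := (univ : Finset (Finset ι → κ)))
    (Isolates · p)
  have hbad : 2 * #{h : Finset ι → κ | ¬ Isolates h p} ≤ Fintype.card (Finset ι → κ) := by
    refine Nat.le_of_mul_le_mul_right ?_ hpos
    calc 2 * #{h : Finset ι → κ | ¬ Isolates h p} * Fintype.card κ
        ≤ 2 * (4 * (Fintype.card ι - m).choose m * Fintype.card (Finset ι → κ)) := by
          rw [mul_assoc]
          exact Nat.mul_le_mul_left 2 (card_not_isolates_mul_card_le hp)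
      _ = Fintype.card (Finset ι → κ) * Fintype.card κ := by rw [hκ]; ring
  rw [card_univ] at hsplit
  omega

end Hashing

section BalancedCount

variable {m : ℕ}

lemma isBalanced_iff (hι : Fintype.card ι = 4 * m) (p : Finset ι × Finset ι) :
    IsBalanced m p ↔ #p.1 = 2 * m ∧ #(p.1 ∩ p.2) = m ∧ #(p.1ᶜ ∩ p.2) = m := by
  have hfst := card_inter_add_card_sdiff p.1 p.2
  have hcompl := card_inter_add_card_sdiff p.1ᶜ p.2ᶜ
  have hsum := card_add_card_compl p.1
  have hdiffer : p.1ᶜ \ p.2ᶜ = p.1ᶜ ∩ p.2 := by rw [sdiff_eq, compl_compl]; rfl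
  simp only [IsBalanced, Fin.forall_fin_two, agreeSet, differSet, levelSet, ← hdiffer]
  simp only [if_true, one_ne_zero, if_false]
  omega

open Classical in
lemma card_isBalanced (hι : Fintype.card ι = 4 * m) :
    #{p : Finset ι × Finset ι | IsBalanced m p} =
      (4 * m).choose (2 * m) * (2 * m).choose m ^ 2 := by
  have hsnd (A : Finset ι) : #{B : Finset ι | IsBalanced m (A, B)} =
      if #A = 2 * m then (2 * m).choose m ^ 2 else 0 := by
    simp only [isBalanced_iff hι]
    split_ifs with hA
    · simp only [hA, true_and]
      rw [card_filter_card_inter_eq, card_compl, hι, hA, show 4 * m - 2 * m = 2 * m by omega, sq]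
    · simp [hA]
  calc #{p : Finset ι × Finset ι | IsBalanced m p}
      = ∑ A : Finset ι, #{B : Finset ι | IsBalanced m (A, B)} := by
        simp only [card_filter, Fintype.sum_prod_type]
    _ = #{A : Finset ι | #A = 2 * m} * (2 * m).choose m ^ 2 := by
        simp only [hsnd]
        rw [← sum_filter, sum_const, smul_eq_mul]
    _ = (4 * m).choose (2 * m) * (2 * m).choose m ^ 2 := by
        rw [← Fintype.card_subtype, Fintype.card_finset_len, hι]

open Classical in
lemma pow_le_mul_card_isBalanced (hι : Fintype.card ι = 4 * m) (hm : 0 < m) :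
    4 ^ Fintype.card ι ≤ 16 * m ^ 3 * #{p : Finset ι × Finset ι | IsBalanced m p} := by
  have hcentral (n : ℕ) (hn : 0 < n) : 4 ^ n ≤ 2 * n * (2 * n).choose n :=
    Nat.four_pow_le_two_mul_self_mul_centralBinom n hn
  have hmiddle := hcentral (2 * m) (by positivity)
  rw [show 2 * (2 * m) = 4 * m by ring] at hmiddle
  calc 4 ^ Fintype.card ι = 4 ^ (2 * m) * (4 ^ m) ^ 2 := by rw [hι]; ring
    _ ≤ (4 * m * (4 * m).choose (2 * m)) * (2 * m * (2 * m).choose m) ^ 2 := by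
        gcongr
        exact hcentral m hm
    _ = 16 * m ^ 3 * #{p : Finset ι × Finset ι | IsBalanced m p} := by
        rw [card_isBalanced hι]; ring

end BalancedCount

section Shift

variable {κ : Type*} [Fintype κ] {m : ℕ}

open Classical in
lemma card_isBalanced_and_isolates_symmDiff (p : Finset ι × Finset ι) :
    #{x : (Finset ι → κ) × (Finset ι × Finset ι) |
      IsBalanced m (p ∆ x.2) ∧ Isolates x.1 (p ∆ x.2)} =
    ∑ s with IsBalanced m s, #{h : Finset ι → κ | Isolates h s} := by
  rw [card_filter, Fintype.sum_prod_type_right, sum_filter]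
  refine (Equiv.sum_comp (symmDiff_right_involutive p).toPerm fun s =>
    ∑ h : Finset ι → κ, if IsBalanced m s ∧ Isolates h s then 1 else 0).trans ?_
  refine sum_congr rfl fun s _ => ?_
  by_cases hs : IsBalanced m s <;> simp [hs]

open Classical in
lemma card_le_mul_card_isBalanced_and_isolates (hm : 0 < m) (hι : Fintype.card ι = 4 * m)
    (hκ : Fintype.card κ = 8 * (3 * m).choose m) (hpos : 0 < Fintype.card κ)
    (p : Finset ι × Finset ι) :
    Fintype.card ((Finset ι → κ) × (Finset ι × Finset ι)) ≤
      32 * m ^ 3 * #{x : (Finset ι → κ) × (Finset ι × Finset ι) |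
        IsBalanced m (p ∆ x.2) ∧ Isolates x.1 (p ∆ x.2)} := by
  have hisolates : #{s : Finset ι × Finset ι | IsBalanced m s} * Fintype.card (Finset ι → κ) ≤
      2 * ∑ s with IsBalanced m s, #{h : Finset ι → κ | Isolates h s} := by
    rw [mul_sum, ← smul_eq_mul]
    refine card_nsmul_le_sum _ _ _ fun s hs => ?_
    refine card_le_two_mul_card_isolates ((mem_filter_univ s).1 hs) ?_ hpos
    rw [hκ, hι, show 4 * m - m = 3 * m by omega]
  rw [card_isBalanced_and_isolates_symmDiff]
  calc Fintype.card ((Finset ι → κ) × (Finset ι × Finset ι))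
      = 4 ^ Fintype.card ι * Fintype.card (Finset ι → κ) := by
        rw [Fintype.card_prod, Fintype.card_prod, Fintype.card_finset, ← mul_pow, mul_comm]
        norm_num
    _ ≤ 16 * m ^ 3 * #{s : Finset ι × Finset ι | IsBalanced m s} *
          Fintype.card (Finset ι → κ) := by
        gcongr
        exact pow_le_mul_card_isBalanced hι hm
    _ ≤ 16 * m ^ 3 * (2 * ∑ s with IsBalanced m s, #{h : Finset ι → κ | Isolates h s}) := by
        rw [mul_assoc]
        gcongr
    _ = 32 * m ^ 3 * ∑ s with IsBalanced m s, #{h : Finset ι → κ | Isolates h s} := by ring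

theorem exists_list_isBalanced_and_isolates (hm : 0 < m) (hι : Fintype.card ι = 4 * m)
    (hκ : Fintype.card κ = 8 * (3 * m).choose m) :
    ∃ l : Fin (32 * m ^ 3 * (8 * m)) → (Finset ι → κ) × (Finset ι × Finset ι),
      ∀ p, ∃ t, IsBalanced m (p ∆ (l t).2) ∧ Isolates (l t).1 (p ∆ (l t).2) := by
  classical
  have hpos : 0 < Fintype.card κ := by
    have hchoose : 0 < (3 * m).choose m := Nat.choose_pos (by omega)
    omega
  have : Nonempty κ := Fintype.card_pos_iff.1 hpos
  have hpairs : Fintype.card (Finset ι × Finset ι) = 2 ^ (8 * m) := by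
    rw [Fintype.card_prod, Fintype.card_finset, hι, ← pow_add]
    ring_nf
  have hexp : (2 : ℝ) ^ (8 * m) < Real.exp ((8 * m : ℕ) : ℝ) := by
    rw [← Real.exp_one_pow]
    exact pow_lt_pow_left₀ (by linarith [Real.exp_one_gt_d9]) zero_le_two (by positivity)
  exact exists_list_forall_exists_rel
    (fun p (x : (Finset ι → κ) × (Finset ι × Finset ι)) =>
      IsBalanced m (p ∆ x.2) ∧ Isolates x.1 (p ∆ x.2))
    (card_le_mul_card_isBalanced_and_isolates hm hι hκ hpos)
    (by rw [hpairs]; exact_mod_cast hexp)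

end Shift

end SetPairs

section StandardQueries

lemma stdP_nonneg (k : Fin 2) (qq : Fin 2 × Fin 2) : 0 ≤ stdP k qq := by
  unfold stdP
  split_ifs <;> norm_num

lemma sum_stdP (k : Fin 2) : ∑ qq, stdP k qq = 1 := by
  rw [Fintype.sum_prod_type]
  fin_cases k <;> norm_num [stdP, Fin.sum_univ_two]

lemma marginal_stdP (n k q : Fin 2) :
    ∑ qq : Fin 2 × Fin 2, (if (if n = 0 then qq.1 else qq.2) = q then stdP k qq else 0) =
      1 / 2 := by
  rw [Fintype.sum_prod_type]
  fin_cases n <;> fin_cases k <;> fin_cases q <;> simp [stdP, Fin.sum_univ_two]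

lemma eq_of_stdP_zero_ne_zero {qq : Fin 2 × Fin 2} (h : stdP 0 qq ≠ 0) : qq.1 = qq.2 := by
  by_contra hne
  simp [stdP, hne] at h

lemma ne_of_stdP_one_ne_zero {qq : Fin 2 × Fin 2} (h : stdP 1 qq ≠ 0) : qq.1 ≠ qq.2 := by
  intro heq
  simp [stdP, heq] at h

end StandardQueries

section Bits

lemma exists_injOn_bits {α : Type*} {s : Set α} (hs : s.Finite) :
    ∃ e : α → Fin (Nat.clog 2 s.ncard) → ZMod 2, Set.InjOn e s := by
  have hle : s.encard ≤ (Set.univ : Set (Fin (Nat.clog 2 s.ncard) → ZMod 2)).encard := by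
    rw [← hs.cast_ncard_eq, Set.encard_univ, ENat.card_eq_coe_fintype_card]
    exact_mod_cast (Nat.le_pow_clog one_lt_two s.ncard).trans_eq (by simp)
  obtain ⟨e, -, he⟩ := hs.exists_injOn_of_encard_le hle
  exact ⟨e, he⟩

lemma logb_natCast_nonneg {b : ℝ} (hb : 1 ≤ b) (n : ℕ) : 0 ≤ Real.logb b n :=
  div_nonneg (Real.log_natCast_nonneg n) (Real.log_nonneg hb)

lemma monotone_logb_natCast {b : ℝ} (hb : 1 < b) : Monotone fun n : ℕ => Real.logb b n := by
  intro m n hmn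
  obtain rfl | hm := m.eq_zero_or_pos
  · simpa using logb_natCast_nonneg hb.le n
  · exact Real.logb_le_logb_of_le hb (by exact_mod_cast hm) (by exact_mod_cast hmn)

lemma natCast_clog_le_logb_add_one {b : ℕ} (hb : 1 ≤ b) (n : ℕ) :
    (Nat.clog b n : ℝ) ≤ Real.logb b n + 1 := by
  rw [← Real.natCeil_logb_natCast]
  exact (Nat.ceil_lt_add_one (logb_natCast_nonneg (by exact_mod_cast hb) n)).le

end Bits

/-- A retrieval scheme for a pair of messages from `W`, with two servers and the query distribution
`stdP`: equal queries retrieve the first message, different queries the second one. Answers are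
arbitrary symbols rather than bits, and decodability is stated as injectivity. -/
structure Scheme (W : Type*) where
  Answer : Fin 2 → Type
  answer : ∀ n, Fin 2 → W × W → Answer n
  recover_fst : ∀ q w w', answer 0 q w = answer 0 q w' → answer 1 q w = answer 1 q w' →
    w.1 = w'.1
  recover_snd : ∀ q r w w', q ≠ r → answer 0 q w = answer 0 q w' →
    answer 1 r w = answer 1 r w' → w.2 = w'.2

namespace Scheme

variable {W W' : Type*}

/-- The content of server `n`: its answers to both queries. -/
def storage (Γ : Scheme W) (n : Fin 2) (w : W × W) : Fin 2 → Γ.Answer n :=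
  fun q => Γ.answer n q w

/-- The number of possible contents of server `n`. -/
noncomputable def numStates (Γ : Scheme W) (n : Fin 2) : ℕ := (Set.range (Γ.storage n)).ncard

/-- The number of possible answers of server `n`, over all queries. -/
noncomputable def numAnswers (Γ : Scheme W) (n : Fin 2) : ℕ :=
  (Set.range (uncurry (Γ.answer n))).ncard

/-- The total storage in bits, before rounding up to integers. -/
noncomputable def storageBits (Γ : Scheme W) : ℝ := ∑ n, Real.logb 2 (Γ.numStates n)

/-- The total length of the two answers in bits, before rounding up to integers. -/
noncomputable def answerBits (Γ : Scheme W) : ℝ := ∑ n, Real.logb 2 (Γ.numAnswers n)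

/-- The restriction of a scheme along an embedding of the message set. -/
def comap (Γ : Scheme W) (e : W' ↪ W) : Scheme W' where
  Answer := Γ.Answer
  answer n q w := Γ.answer n q (w.map e e)
  recover_fst q _ _ h₀ h₁ := e.injective (Γ.recover_fst q _ _ h₀ h₁)
  recover_snd q r _ _ hqr h₀ h₁ := e.injective (Γ.recover_snd q r _ _ hqr h₀ h₁)

lemma storageBits_comap_le [Finite W] (Γ : Scheme W) (e : W' ↪ W) :
    (Γ.comap e).storageBits ≤ Γ.storageBits := by
  refine sum_le_sum fun n _ =>
    monotone_logb_natCast one_lt_two (Set.ncard_le_ncard ?_ (Set.finite_range _))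
  rintro _ ⟨w, rfl⟩
  exact ⟨w.map e e, rfl⟩

lemma answerBits_comap_le [Finite W] (Γ : Scheme W) (e : W' ↪ W) :
    (Γ.comap e).answerBits ≤ Γ.answerBits := by
  refine sum_le_sum fun n _ =>
    monotone_logb_natCast one_lt_two (Set.ncard_le_ncard ?_ (Set.finite_range _))
  rintro _ ⟨⟨q, w⟩, rfl⟩
  exact ⟨(q, w.map e e), rfl⟩

lemma target_eq_of_answer_eq (Γ : Scheme (Msg L)) {k q r : Fin 2} (hqr : stdP k (q, r) ≠ 0)
    {w w' : Msg L × Msg L} (h₀ : Γ.answer 0 q w = Γ.answer 0 q w')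
    (h₁ : Γ.answer 1 r w = Γ.answer 1 r w') : target k w = target k w' := by
  fin_cases k
  · obtain rfl : q = r := eq_of_stdP_zero_ne_zero hqr
    exact Γ.recover_fst q w w' h₀ h₁
  · exact Γ.recover_snd q r w w' (ne_of_stdP_one_ne_zero hqr) h₀ h₁

/-- The code obtained from a scheme by writing the contents and the answers of the servers in
binary. -/
noncomputable def toCodeBase (Γ : Scheme (Msg L)) (σ β : Fin 2 → ℕ)
    (encodeState : ∀ n, (Fin 2 → Γ.Answer n) → Fin (σ n) → ZMod 2)
    (encodeAnswer : ∀ n, Γ.Answer n → Fin (β n) → ZMod 2) : CodeBase L (Fin 2) where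
  P := stdP
  P_nonneg := stdP_nonneg
  P_sum := sum_stdP
  stor := σ
  phi n w := encodeState n (Γ.storage n w)
  blen n _ := β n
  ans n q := extend (fun w => encodeState n (Γ.storage n w))
    (fun w => encodeAnswer n (Γ.answer n q w)) 0
  dec k q r a b := extend
    (fun w => (encodeAnswer 0 (Γ.answer 0 q w), encodeAnswer 1 (Γ.answer 1 r w)))
    (target k) 0 (a, b)
  privacy n q s := by rw [marginal_stdP, marginal_stdP]

section

variable {Γ : Scheme (Msg L)} {σ β : Fin 2 → ℕ}
  {encodeState : ∀ n, (Fin 2 → Γ.Answer n) → Fin (σ n) → ZMod 2}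
  {encodeAnswer : ∀ n, Γ.Answer n → Fin (β n) → ZMod 2}

lemma betaRate_toCodeBase (n : Fin 2) :
    betaRate (Γ.toCodeBase σ β encodeState encodeAnswer) n = β n := by
  change ∑ qq, stdP 0 qq * (β n : ℝ) = β n
  rw [← sum_mul, sum_stdP, one_mul]

lemma ans_toCodeBase (hstate : ∀ n, Set.InjOn (encodeState n) (Set.range (Γ.storage n)))
    (n q : Fin 2) (w : Msg L × Msg L) :
    (Γ.toCodeBase σ β encodeState encodeAnswer).ans n q (encodeState n (Γ.storage n w)) =
      encodeAnswer n (Γ.answer n q w) := by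
  have hfactors : FactorsThrough (fun w => encodeAnswer n (Γ.answer n q w))
      fun w => encodeState n (Γ.storage n w) := fun w w' h =>
    congrArg (encodeAnswer n) (congrFun (hstate n ⟨w, rfl⟩ ⟨w', rfl⟩ h) q)
  exact hfactors.extend_apply 0 w

lemma isZeroError_toCodeBase
    (hstate : ∀ n, Set.InjOn (encodeState n) (Set.range (Γ.storage n)))
    (hanswer : ∀ n, Set.InjOn (encodeAnswer n) (Set.range (uncurry (Γ.answer n)))) :
    IsZeroError (Γ.toCodeBase σ β encodeState encodeAnswer) := by
  rintro k w ⟨q, r⟩ hqr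
  have hinj (n q : Fin 2) (w w' : Msg L × Msg L)
      (h : encodeAnswer n (Γ.answer n q w) = encodeAnswer n (Γ.answer n q w')) :
      Γ.answer n q w = Γ.answer n q w' :=
    hanswer n ⟨(q, w), rfl⟩ ⟨(q, w'), rfl⟩ h
  have hfactors : FactorsThrough (target k) fun w =>
      (encodeAnswer 0 (Γ.answer 0 q w), encodeAnswer 1 (Γ.answer 1 r w)) := fun w w' h =>
    Γ.target_eq_of_answer_eq hqr (hinj 0 q w w' (congrArg Prod.fst h))
      (hinj 1 r w w' (congrArg Prod.snd h))
  calc retrieved (Γ.toCodeBase σ β encodeState encodeAnswer) k (q, r) w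
      = (Γ.toCodeBase σ β encodeState encodeAnswer).dec k q r
          (encodeAnswer 0 (Γ.answer 0 q w)) (encodeAnswer 1 (Γ.answer 1 r w)) :=
        congrArg₂ ((Γ.toCodeBase σ β encodeState encodeAnswer).dec k q r)
          (ans_toCodeBase hstate 0 q w)
          (ans_toCodeBase hstate 1 r w)
    _ = target k w := hfactors.extend_apply 0 w

end

lemma exists_code (Γ : Scheme (Msg L)) :
    ∃ C : Code L, IsZeroError C.base ∧
      ((C.base.stor 0 + C.base.stor 1 : ℕ) : ℝ) ≤ Γ.storageBits + 2 ∧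
      betaRate C.base 0 + betaRate C.base 1 ≤ Γ.answerBits + 2 := by
  choose encodeState hstate using
    fun n => exists_injOn_bits (Set.finite_range (Γ.storage n))
  choose encodeAnswer hanswer using
    fun n => exists_injOn_bits (Set.finite_range (uncurry (Γ.answer n)))
  have hclog (n : ℕ) : (Nat.clog 2 n : ℝ) ≤ Real.logb 2 n + 1 :=
    mod_cast natCast_clog_le_logb_add_one one_le_two n
  refine ⟨⟨Fin 2, Γ.toCodeBase _ _ encodeState encodeAnswer⟩,
    isZeroError_toCodeBase hstate hanswer, ?_, ?_⟩
  · change ((Nat.clog 2 (Γ.numStates 0) + Nat.clog 2 (Γ.numStates 1) : ℕ) : ℝ) ≤ _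
    rw [storageBits, Fin.sum_univ_two]
    push_cast
    linarith [hclog (Γ.numStates 0), hclog (Γ.numStates 1)]
  · rw [betaRate_toCodeBase, betaRate_toCodeBase, ← numAnswers, ← numAnswers, answerBits,
      Fin.sum_univ_two]
    linarith [hclog (Γ.numAnswers 0), hclog (Γ.numAnswers 1)]

end Scheme

section Region

lemma isLittleO_const_natCast_atTop (a : ℝ) : (fun _ => a) =o[atTop] fun m : ℕ => (m : ℝ) :=
  (isLittleO_const_id_atTop a).comp_tendsto tendsto_natCast_atTop_atTop

lemma tendsto_div_add_one_atTop {c : ℕ} (hc : 0 < c) :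
    Tendsto (fun L => L / c + 1) atTop atTop :=
  (tendsto_add_atTop_nat 1).comp (Nat.tendsto_div_const_atTop hc.ne')

lemma mul_div_add_one_mul_le {c : ℕ} (hc : 0 < c) (L : ℕ) (a : ℝ) :
    c * (L / c + 1 : ℕ) * a ≤ L * a + c * |a| := by
  have hlower : (L : ℝ) ≤ c * (L / c + 1 : ℕ) := by
    exact_mod_cast (Nat.lt_mul_div_succ L hc).le
  have hupper : (c : ℝ) * (L / c + 1 : ℕ) ≤ L + c := by
    have hdiv := Nat.mul_div_le L c
    exact_mod_cast (by rw [mul_add_one]; omega : c * (L / c + 1) ≤ L + c)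
  have hexcess : (c * (L / c + 1 : ℕ) - L) * a ≤ c * |a| :=
    calc (c * (L / c + 1 : ℕ) - L) * a
        ≤ (c * (L / c + 1 : ℕ) - L) * |a| :=
          mul_le_mul_of_nonneg_left (le_abs_self a) (sub_nonneg.2 hlower)
      _ ≤ c * |a| := by gcongr; linarith
  linarith

lemma eventually_two_mul_add_le {δ : ℕ → ℝ} (hδ : δ =o[atTop] fun m => (m : ℝ)) {c : ℕ}
    (hc : 0 < c) (a : ℝ) {ε : ℝ} (hε : 0 < ε) :
    ∀ᶠ L : ℕ in atTop,
      2 * (c * (L / c + 1 : ℕ) * a) + δ (L / c + 1) + 2 ≤ 2 * (L * (a + ε)) := by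
  have herror : (fun m : ℕ => δ m + (2 + 2 * (c * |a|))) =o[atTop] fun m => (m : ℝ) :=
    hδ.add (isLittleO_const_natCast_atTop _)
  filter_upwards [(tendsto_div_add_one_atTop hc).eventually (herror.def hε),
    eventually_ge_atTop 1] with L hL hLpos
  have herror_le : δ (L / c + 1) + (2 + 2 * (c * |a|)) ≤ ε * (L / c + 1 : ℕ) := by
    simpa only [Real.norm_natCast] using (Real.le_norm_self _).trans hL
  have hblocks_le : ε * (L / c + 1 : ℕ) ≤ ε * (2 * L) := by
    have hdiv := Nat.div_le_self L c
    gcongr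
    exact_mod_cast (by omega : L / c + 1 ≤ 2 * L)
  linarith [mul_div_add_one_mul_le hc L a]

theorem mem_region_of_schemes {a b : ℝ} {c : ℕ} (hc : 0 < c) {δ : ℕ → ℝ}
    (hδ : δ =o[atTop] fun m => (m : ℝ))
    (hscheme : ∀ᶠ m in atTop, ∃ (W : Type) (_ : Finite W) (Γ : Scheme W),
      2 ^ (c * m) ≤ Nat.card W ∧ Γ.storageBits ≤ 2 * (c * m * a) + δ m ∧
        Γ.answerBits ≤ 2 * (c * m * b) + δ m) :
    (a, b) ∈ Region := by
  intro ε hε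
  refine eventually_atTop.1 ?_
  filter_upwards [(tendsto_div_add_one_atTop hc).eventually hscheme,
    eventually_two_mul_add_le hδ hc a hε, eventually_two_mul_add_le hδ hc b hε]
    with L ⟨W, _, Γ, hcard, hstorage, hanswer⟩ ha hb
  have hmsg : Nat.card (Msg L) ≤ Nat.card W := by
    refine le_trans ?_ hcard
    simpa using Nat.pow_le_pow_right two_pos (Nat.lt_mul_div_succ L hc).le
  obtain ⟨e⟩ : Nonempty (Msg L ↪ W) := by
    have := Fintype.ofFinite W
    exact Embedding.nonempty_of_card_le (by simpa only [Nat.card_eq_fintype_card] using hmsg)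
  obtain ⟨C, hC, hstor, hbeta⟩ := (Γ.comap e).exists_code
  refine ⟨C, hC, ?_, ?_⟩
  · linarith [Γ.storageBits_comap_le e]
  · linarith [Γ.answerBits_comap_le e]

end Region

section ShiftScheme

variable {ι κ τ : Type} [Fintype ι] [DecidableEq ι] {m : ℕ}
  (l : τ → (Finset ι → κ) × (Finset ι × Finset ι)) (t : Finset ι × Finset ι → τ)

/-- The pair `p` after the shift from the list `l` that the index function `t` selects for it. -/
def shifted (p : Finset ι × Finset ι) : Finset ι × Finset ι := p ∆ (l (t p)).2

/-- `t` selects from the list `l` for each pair a shift that makes it `m`-balanced, together with a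
hash function that isolates the shifted pair. -/
def SelectsShift (m : ℕ) : Prop :=
  ∀ p, IsBalanced m (shifted l t p) ∧ Isolates (l (t p)).1 (shifted l t p)

variable {l t}

lemma differSet_shifted_eq (ht : SelectsShift l t m) {p p' : Finset ι × Finset ι} {q r : Fin 2}
    (hindex : t p = t p') (hagree : agreeSet q (shifted l t p) = agreeSet q (shifted l t p'))
    (hhash : (l (t p)).1 (differSet r (shifted l t p)) =
      (l (t p')).1 (differSet r (shifted l t p'))) :
    differSet r (shifted l t p) = differSet r (shifted l t p') :=
  (ht p).2.differSet_eq hagree (((ht p).1 r).2.trans ((ht p').1 r).2.symm) (hindex ▸ hhash)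

lemma fst_eq_of_shifted_cells_eq (ht : SelectsShift l t m) {p p' : Finset ι × Finset ι}
    {q : Fin 2} (hindex : t p = t p')
    (hagree : agreeSet q (shifted l t p) = agreeSet q (shifted l t p'))
    (hhash : (l (t p)).1 (differSet q (shifted l t p)) =
      (l (t p')).1 (differSet q (shifted l t p'))) :
    p.1 = p'.1 := by
  have hlevel : levelSet q (shifted l t p).1 = levelSet q (shifted l t p').1 := by
    rw [← differSet_union_agreeSet, ← differSet_union_agreeSet, hagree,
      differSet_shifted_eq ht hindex hagree hhash]
  have hfst := levelSet_injective q hlevel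
  rw [shifted, shifted, hindex] at hfst
  exact symmDiff_left_injective _ hfst

lemma snd_eq_of_shifted_cells_eq (ht : SelectsShift l t m) {p p' : Finset ι × Finset ι}
    {q r : Fin 2} (hqr : q ≠ r) (hindex : t p = t p')
    (hagree : agreeSet q (shifted l t p) = agreeSet q (shifted l t p'))
    (hhash : (l (t p)).1 (differSet r (shifted l t p)) =
      (l (t p')).1 (differSet r (shifted l t p'))) :
    p.2 = p'.2 := by
  have hlevel : levelSet q (shifted l t p).2 = levelSet q (shifted l t p').2 := by
    rw [← differSet_union_agreeSet_of_ne hqr, ← differSet_union_agreeSet_of_ne hqr, hagree,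
      differSet_shifted_eq ht hindex hagree hhash]
  have hsnd := levelSet_injective q hlevel
  rw [shifted, shifted, hindex] at hsnd
  exact symmDiff_left_injective _ hsnd

/-- The scheme in which the first server answers `q` with the index of the shift and the cell
`agreeSet q` of the shifted pair, and the second server answers `r` with the hash value of its cell
`differSet r`. -/
def shiftScheme (ht : SelectsShift l t m) : Scheme (Finset ι) where
  Answer
    | 0 => τ × Finset ι
    | 1 => κ
  answer
    | 0, q, p => (t p, agreeSet q (shifted l t p))
    | 1, r, p => (l (t p)).1 (differSet r (shifted l t p))
  recover_fst _ _ _ h₀ h₁ :=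
    fst_eq_of_shifted_cells_eq ht (congrArg Prod.fst h₀) (congrArg Prod.snd h₀) h₁
  recover_snd _ _ _ _ hqr h₀ h₁ :=
    snd_eq_of_shifted_cells_eq ht hqr (congrArg Prod.fst h₀) (congrArg Prod.snd h₀) h₁

lemma numStates_zero_shiftScheme_le [Fintype τ] (ht : SelectsShift l t m) :
    (shiftScheme ht).numStates 0 ≤
      Fintype.card τ * ((Fintype.card ι).choose m * (Fintype.card ι - m).choose m) := by
  classical
  change (Set.range fun p q => (t p, agreeSet q (shifted l t p))).ncard ≤ _
  let cells : Finset (Σ _ : Finset ι, Finset ι) :=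
    (powersetCard m univ).sigma fun A => powersetCard m Aᶜ
  have hcells : #cells = (Fintype.card ι).choose m * (Fintype.card ι - m).choose m := by
    rw [card_sigma, sum_congr rfl (g := fun _ => (Fintype.card ι - m).choose m), sum_const,
      card_powersetCard, card_univ, smul_eq_mul]
    intro A hA
    rw [card_powersetCard, card_compl, (mem_powersetCard.1 hA).2]
  have hstates : (Set.range fun p q => (t p, agreeSet q (shifted l t p))) ⊆
      ((univ ×ˢ cells).image fun x => ![(x.1, x.2.1), (x.1, x.2.2)] :
        Finset (Fin 2 → τ × Finset ι)) := by
    rintro _ ⟨p, rfl⟩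
    refine mem_coe.2 (mem_image.2
      ⟨(t p, ⟨agreeSet 0 (shifted l t p), agreeSet 1 (shifted l t p)⟩), ?_, ?_⟩)
    · have hdisjoint := disjoint_agreeSet zero_ne_one (shifted l t p)
      simp [cells, mem_powersetCard, subset_compl_iff_disjoint_right, hdisjoint,
        ((ht p).1 0).1, ((ht p).1 1).1]
    · ext1 q
      fin_cases q <;> rfl
  refine (Set.ncard_le_ncard hstates (finite_toSet _)).trans ?_
  rw [Set.ncard_coe_finset, ← hcells, ← card_univ, ← card_product]
  exact card_image_le

lemma numAnswers_zero_shiftScheme_le [Fintype τ] (ht : SelectsShift l t m) :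
    (shiftScheme ht).numAnswers 0 ≤ Fintype.card τ * (Fintype.card ι).choose m := by
  change (Set.range fun x : Fin 2 × Finset ι × Finset ι =>
    (t x.2, agreeSet x.1 (shifted l t x.2))).ncard ≤ _
  rw [← card_univ, ← card_univ, ← card_powersetCard, ← card_product, ← Set.ncard_coe_finset]
  refine Set.ncard_le_ncard ?_ (finite_toSet _)
  rintro _ ⟨⟨q, p⟩, rfl⟩
  exact mem_product.2 ⟨mem_univ _, mem_powersetCard.2 ⟨subset_univ _, ((ht p).1 q).1⟩⟩

lemma numStates_one_shiftScheme_le [Fintype κ] (ht : SelectsShift l t m) :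
    (shiftScheme ht).numStates 1 ≤ Fintype.card κ ^ 2 := by
  refine (Set.ncard_le_card (α := Fin 2 → κ) _).trans_eq ?_
  simp

lemma numAnswers_one_shiftScheme_le [Fintype κ] (ht : SelectsShift l t m) :
    (shiftScheme ht).numAnswers 1 ≤ Fintype.card κ := by
  refine (Set.ncard_le_card (α := κ) _).trans_eq ?_
  simp

theorem exists_scheme_card_le (hm : 0 < m) : ∃ Γ : Scheme (Finset (Fin (4 * m))),
    Γ.numStates 0 ≤ 256 * m ^ 4 * ((4 * m).choose m * (3 * m).choose m) ∧
    Γ.numStates 1 ≤ (8 * (3 * m).choose m) ^ 2 ∧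
    Γ.numAnswers 0 ≤ 256 * m ^ 4 * (4 * m).choose m ∧
    Γ.numAnswers 1 ≤ 8 * (3 * m).choose m := by
  obtain ⟨l, hl⟩ := exists_list_isBalanced_and_isolates (ι := Fin (4 * m))
    (κ := Fin (8 * (3 * m).choose m)) hm (Fintype.card_fin _) (Fintype.card_fin _)
  choose t ht using hl
  have hselects : SelectsShift l t m := ht
  have hlist : 32 * m ^ 3 * (8 * m) = 256 * m ^ 4 := by ring
  refine ⟨shiftScheme hselects, ?_, ?_, ?_, ?_⟩
  · simpa [hlist, show 4 * m - m = 3 * m by omega] using numStates_zero_shiftScheme_le hselects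
  · simpa using numStates_one_shiftScheme_le hselects
  · simpa [hlist] using numAnswers_zero_shiftScheme_le hselects
  · simpa using numAnswers_one_shiftScheme_le hselects

end ShiftScheme

section Rates

lemma choose_mul_pow_mul_pow_le_add_pow {R : Type*} [CommSemiring R] [PartialOrder R]
    [IsOrderedRing R] {x y : R} (hx : 0 ≤ x) (hy : 0 ≤ y) {n k : ℕ} (hk : k ≤ n) :
    n.choose k * (x ^ k * y ^ (n - k)) ≤ (x + y) ^ n := by
  rw [add_pow, mul_comm]
  exact single_le_sum (f := fun k => x ^ k * y ^ (n - k) * (n.choose k : R))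
    (fun _ _ => by positivity) (mem_range.2 (by omega))

lemma logb_self_pow {b : ℝ} (hb : 1 < b) (k : ℕ) : Real.logb b (b ^ k) = k := by
  rw [Real.logb_pow, Real.logb_self_eq_one hb, mul_one]

lemma logb_choose_le {b y : ℝ} (hb : 1 < b) (hy : 0 < y) {n k : ℕ} (hk : k ≤ n) :
    Real.logb b (n.choose k) ≤ n * Real.logb b (1 + y) - (n - k : ℕ) * Real.logb b y := by
  have hchoose : (0 : ℝ) < n.choose k := by exact_mod_cast Nat.choose_pos hk
  have hterm : (n.choose k : ℝ) * y ^ (n - k) ≤ (1 + y) ^ n := by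
    simpa using choose_mul_pow_mul_pow_le_add_pow zero_le_one hy.le hk
  have hlog := Real.logb_le_logb_of_le hb (by positivity) hterm
  rw [Real.logb_mul hchoose.ne' (by positivity), Real.logb_pow, Real.logb_pow] at hlog
  linarith

lemma logb_choose_four_mul_le (m : ℕ) :
    Real.logb 2 ((4 * m).choose m) ≤ m * (8 - 3 * Real.logb 2 3) := by
  have hle := logb_choose_le one_lt_two zero_lt_three (show m ≤ 4 * m by omega)
  have hlog : Real.logb 2 (1 + 3) = 2 := by
    rw [show (1 + 3 : ℝ) = 2 ^ 2 by norm_num, logb_self_pow one_lt_two, Nat.cast_ofNat]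
  rw [hlog, show 4 * m - m = 3 * m by omega] at hle
  push_cast at hle
  linarith

lemma logb_choose_three_mul_le (m : ℕ) :
    Real.logb 2 ((3 * m).choose m) ≤ m * (3 * Real.logb 2 3 - 2) := by
  have hle := logb_choose_le one_lt_two zero_lt_two (show m ≤ 3 * m by omega)
  rw [Real.logb_self_eq_one one_lt_two, show (1 + 2 : ℝ) = 3 by norm_num,
    show 3 * m - m = 2 * m by omega] at hle
  push_cast at hle
  linarith

lemma isLittleO_const_add_logb_natCast (a b : ℝ) :
    (fun m : ℕ => a + b * Real.logb 2 m) =o[atTop] fun m => (m : ℝ) := by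
  refine (isLittleO_const_natCast_atTop a).add (IsLittleO.const_mul_left ?_ b)
  simp only [Real.logb, div_eq_inv_mul]
  exact (Real.isLittleO_log_id_atTop.comp_tendsto tendsto_natCast_atTop_atTop).const_mul_left _

lemma logb_256_mul_pow {m : ℕ} (hm : 0 < m) :
    Real.logb 2 (256 * (m : ℝ) ^ 4) = 8 + 4 * Real.logb 2 m := by
  have hm' : (m : ℝ) ≠ 0 := by exact_mod_cast hm.ne'
  rw [show (256 : ℝ) = 2 ^ 8 by norm_num, Real.logb_mul (by norm_num) (pow_ne_zero 4 hm'),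
    logb_self_pow one_lt_two, Real.logb_pow, Nat.cast_ofNat, Nat.cast_ofNat]

lemma exists_scheme_bits_le {m : ℕ} (hm : 0 < m) :
    ∃ Γ : Scheme (Finset (Fin (4 * m))),
      Γ.storageBits ≤
        2 * (4 * m * (1 / 4 + 3 / 4 * Real.logb 2 3)) + (14 + 4 * Real.logb 2 m) ∧
      Γ.answerBits ≤ 2 * (4 * m * (3 / 4)) + (14 + 4 * Real.logb 2 m) := by
  obtain ⟨Γ, hstates₀, hstates₁, hanswers₀, hanswers₁⟩ := exists_scheme_card_le hm
  have hchoose₄ : ((4 * m).choose m : ℝ) ≠ 0 := by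
    exact_mod_cast (Nat.choose_pos (by omega)).ne'
  have hchoose₃ : ((3 * m).choose m : ℝ) ≠ 0 := by
    exact_mod_cast (Nat.choose_pos (by omega)).ne'
  have hlog₈ : Real.logb 2 8 = 3 := by
    rw [show (8 : ℝ) = 2 ^ 3 by norm_num, logb_self_pow one_lt_two, Nat.cast_ofNat]
  have hstateBits₀ := monotone_logb_natCast one_lt_two hstates₀
  have hstateBits₁ := monotone_logb_natCast one_lt_two hstates₁
  have hanswerBits₀ := monotone_logb_natCast one_lt_two hanswers₀
  have hanswerBits₁ := monotone_logb_natCast one_lt_two hanswers₁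
  push_cast at hstateBits₀ hstateBits₁ hanswerBits₀ hanswerBits₁
  rw [Real.logb_mul (by positivity) (by positivity), logb_256_mul_pow hm,
    Real.logb_mul hchoose₄ hchoose₃] at hstateBits₀
  rw [Real.logb_pow, Real.logb_mul (by norm_num) hchoose₃, hlog₈, Nat.cast_ofNat] at hstateBits₁
  rw [Real.logb_mul (by positivity) hchoose₄, logb_256_mul_pow hm] at hanswerBits₀
  rw [Real.logb_mul (by norm_num) hchoose₃, hlog₈] at hanswerBits₁
  have hchooseBits₄ := logb_choose_four_mul_le m
  have hchooseBits₃ := logb_choose_three_mul_le m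
  refine ⟨Γ, ?_, ?_⟩
  · rw [Scheme.storageBits, Fin.sum_univ_two]
    linarith
  · rw [Scheme.answerBits, Fin.sum_univ_two]
    linarith

end Rates

/-- The pair `(1/4 + (3/4)·log₂ 3, 3/4)` belongs to the achievable
storage-retrieval rate region `R` of the (2,2) PIR problem. -/
theorem statement10 : ((1/4 + (3/4) * Real.logb 2 3, 3/4) : ℝ × ℝ) ∈ Region := by
  refine mem_region_of_schemes (c := 4) four_pos (isLittleO_const_add_logb_natCast 14 4) ?_
  filter_upwards [eventually_gt_atTop 0] with m hm
  obtain ⟨Γ, hstorage, hanswer⟩ := exists_scheme_bits_le hm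
  exact ⟨Finset (Fin (4 * m)), inferInstance, Γ, by simp, hstorage, hanswer⟩

end PIR
end

section
/- For the Section-III random variables, the Shannon entropies satisfy H(X1, X2) = 3/2 and H(Y1 | X1) = (3/4)·(log₂ 3 − 2/3); consequently the storage rate (1/2)·(H(X1,X2) + 2·H(Y1|X1)) equals 1/4 + (3/4)·log₂ 3. -/
/-!
For a random variable on a uniform finite sample space, the entropy is the log of the size of the
space minus the average, over outcomes, of the log of the size of the fibre through that outcome.
On the four outcomes of `(V1, V2)`, both pairs `(X1, X2)` and `(Y1, X1)` have fibres of sizes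
`1, 1, 2`, while `X1` has fibres of sizes `1, 3`; the chain rule then gives `H(Y1 | X1)`.
-/

open scoped BigOperators

namespace PIR

/-- Probability that a random variable `X` (on finite sample space `Ω` with
probability mass function `p`) takes the value `x`. -/
noncomputable def prOf {Ω : Type} [Fintype Ω] {γ : Type} [DecidableEq γ]
    (p : Ω → ℝ) (X : Ω → γ) (x : γ) : ℝ :=
  ∑ ω : Ω, if X ω = x then p ω else 0

/-- Shannon entropy (in bits) of the random variable `X`. -/
noncomputable def ent {Ω : Type} [Fintype Ω] {γ : Type} [Fintype γ] [DecidableEq γ]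
    (p : Ω → ℝ) (X : Ω → γ) : ℝ :=
  ∑ x : γ, -(prOf p X x * Real.logb 2 (prOf p X x))

/-- Conditional entropy `H(X|Y) = H(X,Y) - H(Y)` (in bits). -/
noncomputable def condEnt {Ω : Type} [Fintype Ω] {γ δ : Type} [Fintype γ] [DecidableEq γ]
    [Fintype δ] [DecidableEq δ] (p : Ω → ℝ) (X : Ω → γ) (Y : Ω → δ) : ℝ :=
  ent p (fun ω => (X ω, Y ω)) - ent p Y

/-- The sample space of the Section-III random variables: `(V1, V2)` independent
uniform Bernoulli(1/2), i.e. the uniform distribution on `Bool × Bool`. -/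
noncomputable def secp : Bool × Bool → ℝ := fun _ => 1/4

/-- `X1 = V1 ∧ V2`. -/
def secX1 : Bool × Bool → Bool := fun v => v.1 && v.2

/-- `X2 = (¬V1) ∧ (¬V2)`. -/
def secX2 : Bool × Bool → Bool := fun v => (!v.1) && (!v.2)

/-- `Y1 = V1 ∧ (¬V2)`. -/
def secY1 : Bool × Bool → Bool := fun v => v.1 && (!v.2)

/-- `Y2 = (¬V1) ∧ V2`. -/
def secY2 : Bool × Bool → Bool := fun v => (!v.1) && v.2

section FiniteSampleSpace

variable {Ω γ : Type} [Fintype Ω] [DecidableEq γ]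

lemma ent_eq_neg_sum_mul_logb_prOf [Fintype γ] (p : Ω → ℝ) (X : Ω → γ) :
    ent p X = -∑ ω, p ω * Real.logb 2 (prOf p X (X ω)) := by
  have prOf_mul (x : γ) (a : ℝ) : prOf p X x * a = ∑ ω, if X ω = x then p ω * a else 0 := by
    simp only [prOf, Finset.sum_mul, ite_mul, zero_mul]
  rw [ent, Finset.sum_neg_distrib, neg_inj]
  calc ∑ x, prOf p X x * Real.logb 2 (prOf p X x)
      = ∑ ω, ∑ x, if X ω = x then p ω * Real.logb 2 (prOf p X x) else 0 := by
        rw [Finset.sum_comm]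
        exact Finset.sum_congr rfl fun x _ ↦ prOf_mul x _
    _ = ∑ ω, p ω * Real.logb 2 (prOf p X (X ω)) := by
        simp only [Finset.sum_ite_eq, Finset.mem_univ, if_true]

lemma prOf_const (c : ℝ) (X : Ω → γ) (x : γ) :
    prOf (fun _ ↦ c) X x = Finset.card {ω | X ω = x} * c := by
  rw [prOf, ← Finset.sum_filter, Finset.sum_const, nsmul_eq_mul]

lemma ent_uniform [Nonempty Ω] [Fintype γ] (X : Ω → γ) :
    ent (fun _ ↦ (Fintype.card Ω : ℝ)⁻¹) X = Real.logb 2 (Fintype.card Ω) -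
      (∑ ω, Real.logb 2 (Finset.card {ω' | X ω' = X ω})) / Fintype.card Ω := by
  have card_ne_zero : (Fintype.card Ω : ℝ) ≠ 0 := Nat.cast_ne_zero.mpr Fintype.card_ne_zero
  have logb_prOf (ω : Ω) : Real.logb 2 (prOf (fun _ ↦ (Fintype.card Ω : ℝ)⁻¹) X (X ω)) =
      Real.logb 2 (Finset.card {ω' | X ω' = X ω}) - Real.logb 2 (Fintype.card Ω) := by
    have fibre_nonempty : Finset.Nonempty {ω' | X ω' = X ω} :=
      ⟨ω, (Finset.mem_filter_univ ω).mpr rfl⟩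
    rw [prOf_const, ← div_eq_mul_inv,
      Real.logb_div (Nat.cast_ne_zero.mpr fibre_nonempty.card_ne_zero) card_ne_zero]
  simp only [ent_eq_neg_sum_mul_logb_prOf, logb_prOf, ← Finset.mul_sum, Finset.sum_sub_distrib,
    Finset.sum_const, Finset.card_univ, nsmul_eq_mul]
  field_simp
  ring

end FiniteSampleSpace

lemma ent_secp {γ : Type} [Fintype γ] [DecidableEq γ] (X : Bool × Bool → γ) :
    ent secp X = 2 - (∑ v, Real.logb 2 (Finset.card {w | X w = X v})) / 4 := by
  have card_eq : (Fintype.card (Bool × Bool) : ℝ) = 4 := by norm_num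
  have secp_eq : secp = fun _ ↦ (Fintype.card (Bool × Bool) : ℝ)⁻¹ := by
    rw [card_eq, ← one_div]
    rfl
  have logb_four : Real.logb 2 4 = 2 := by
    rw [show (4 : ℝ) = 2 ^ (2 : ℝ) by norm_num, Real.logb_rpow two_pos (by norm_num)]
  rw [secp_eq, ent_uniform, card_eq, logb_four]

lemma ent_secX1_secX2 : ent secp (fun v ↦ (secX1 v, secX2 v)) = 3 / 2 := by
  have card_fibre (v : Bool × Bool) :
      Finset.card {w | (secX1 w, secX2 w) = (secX1 v, secX2 v)} = if v.1 = v.2 then 1 else 2 := by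
    decide +revert
  rw [ent_secp]
  simp only [card_fibre]
  norm_num [Fintype.sum_prod_type]

lemma ent_secY1_secX1 : ent secp (fun v ↦ (secY1 v, secX1 v)) = 3 / 2 := by
  have card_fibre (v : Bool × Bool) :
      Finset.card {w | (secY1 w, secX1 w) = (secY1 v, secX1 v)} = if v.1 then 1 else 2 := by
    decide +revert
  rw [ent_secp]
  simp only [card_fibre]
  norm_num [Fintype.sum_prod_type]

lemma ent_secX1 : ent secp secX1 = 2 - 3 / 4 * Real.logb 2 3 := by
  have card_fibre (v : Bool × Bool) :
      Finset.card {w | secX1 w = secX1 v} = if v.1 && v.2 then 1 else 3 := by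
    decide +revert
  rw [ent_secp]
  simp only [card_fibre]
  norm_num [Fintype.sum_prod_type]
  ring

lemma condEnt_secY1_secX1 :
    condEnt secp secY1 secX1 = 3 / 4 * (Real.logb 2 3 - 2 / 3) := by
  rw [condEnt, ent_secY1_secX1, ent_secX1]
  ring

/-- `H(X1, X2) = 3/2` and `H(Y1 | X1) = (3/4)·(log₂ 3 − 2/3)`; consequently
the storage rate `(1/2)·(H(X1,X2) + 2·H(Y1|X1))` equals `1/4 + (3/4)·log₂ 3`. -/
theorem statement12 :
    ent secp (fun v => (secX1 v, secX2 v)) = 3/2 ∧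
    condEnt secp secY1 secX1 = (3/4) * (Real.logb 2 3 - 2/3) ∧
    (1/2) * (ent secp (fun v => (secX1 v, secX2 v)) + 2 * condEnt secp secY1 secX1)
      = 1/4 + (3/4) * Real.logb 2 3 := by
  refine ⟨ent_secX1_secX2, condEnt_secY1_secX1, ?_⟩
  rw [ent_secX1_secX2, condEnt_secY1_secX1]
  ring

end PIR
end

section
/- (Ingleton inequality for subspaces.) For any four subspaces A, B, C, D of a finite-dimensional vector space over a field, dim A + dim B + dim(C + D) + dim(A + B + C) + dim(A + B + D) ≤ dim(A + C) + dim(A + D) + dim(B + C) + dim(B + D) + dim(A + B), where + denotes the sum (join) of subspaces; equivalently, in entropy form for the linear random variables associated with these subspaces, I(A;B) ≤ I(A;B|C) + I(A;B|D) + I(C;D). -/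
/-!
Put `Z = A ⊓ B`. Submodularity and monotonicity of the dimension give
`dim Z + dim (C + D) ≤ dim (Z + C) + dim (Z + D)`, and
`dim (Z + X) ≤ dim (A + X) + dim (B + X) - dim (A + B + X)` for `X = C, D`.
Since `dim Z = dim A + dim B - dim (A + B)`, adding these gives the inequality.
Only this last equality is special to subspaces: in entropy terms, `Z` is a common function of
`A` and `B` that carries all of `I(A;B)`, which general random variables need not have.
-/

/-- Submodularity of a function on a lattice, as satisfied by entropies and by matroid rank
functions. Monotonicity is not part of the definition. -/
def IsSubmodular {α M : Type*} [Lattice α] [Add M] [LE M] (r : α → M) : Prop :=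
  ∀ x y, r (x ⊔ y) + r (x ⊓ y) ≤ r x + r y

namespace IsSubmodular

variable {α M : Type*} [Lattice α] [AddCommMonoid M] [PartialOrder M] [IsOrderedAddMonoid M]
  {r : α → M}

theorem add_le_add_of_le_sup_of_le_inf (hr : IsSubmodular r) (hmono : Monotone r)
    {s t x y : α} (hs : s ≤ x ⊔ y) (ht : t ≤ x ⊓ y) : r s + r t ≤ r x + r y :=
  (add_le_add (hmono hs) (hmono ht)).trans (hr x y)

theorem map_add_map_sup_le (hr : IsSubmodular r) (hmono : Monotone r) (z c d : α) :
    r z + r (c ⊔ d) ≤ r (z ⊔ c) + r (z ⊔ d) := by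
  rw [add_comm (r z)]
  exact hr.add_le_add_of_le_sup_of_le_inf hmono (sup_le_sup le_sup_right le_sup_right)
    (le_inf le_sup_left le_sup_left)

theorem map_sup_sup_add_map_sup_le (hr : IsSubmodular r) (hmono : Monotone r) {a b z : α}
    (hza : z ≤ a) (hzb : z ≤ b) (c : α) :
    r (a ⊔ b ⊔ c) + r (z ⊔ c) ≤ r (a ⊔ c) + r (b ⊔ c) :=
  hr.add_le_add_of_le_sup_of_le_inf hmono (sup_sup_distrib_right a b c).le
    (le_inf (sup_le_sup_right hza c) (sup_le_sup_right hzb c))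

theorem ingleton_of_common_lower_bound (hr : IsSubmodular r) (hmono : Monotone r) {a b z : α}
    (hza : z ≤ a) (hzb : z ≤ b) (hz : r a + r b ≤ r (a ⊔ b) + r z) (c d : α) :
    r a + r b + r (c ⊔ d) + r (a ⊔ b ⊔ c) + r (a ⊔ b ⊔ d) ≤
      r (a ⊔ c) + r (a ⊔ d) + r (b ⊔ c) + r (b ⊔ d) + r (a ⊔ b) :=
  calc
    r a + r b + r (c ⊔ d) + r (a ⊔ b ⊔ c) + r (a ⊔ b ⊔ d)
    _ ≤ r (a ⊔ b) + r z + r (c ⊔ d) + r (a ⊔ b ⊔ c) + r (a ⊔ b ⊔ d) := by gcongr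
    _ = r (a ⊔ b) + (r z + r (c ⊔ d)) + r (a ⊔ b ⊔ c) + r (a ⊔ b ⊔ d) := by abel
    _ ≤ r (a ⊔ b) + (r (z ⊔ c) + r (z ⊔ d)) + r (a ⊔ b ⊔ c) + r (a ⊔ b ⊔ d) := by
      gcongr r (a ⊔ b) + ?_ + _ + _
      exact hr.map_add_map_sup_le hmono z c d
    _ = r (a ⊔ b) + (r (a ⊔ b ⊔ c) + r (z ⊔ c)) + (r (a ⊔ b ⊔ d) + r (z ⊔ d)) := by abel
    _ ≤ r (a ⊔ b) + (r (a ⊔ c) + r (b ⊔ c)) + (r (a ⊔ d) + r (b ⊔ d)) := by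
      gcongr r (a ⊔ b) + ?_ + ?_
      · exact hr.map_sup_sup_add_map_sup_le hmono hza hzb c
      · exact hr.map_sup_sup_add_map_sup_le hmono hza hzb d
    _ = r (a ⊔ c) + r (a ⊔ d) + r (b ⊔ c) + r (b ⊔ d) + r (a ⊔ b) := by abel

end IsSubmodular

section Rank

universe u v

variable (R : Type u) (V : Type v) [Ring R] [AddCommGroup V] [Module R V]

theorem isSubmodular_rank [HasRankNullity.{v} R] :
    IsSubmodular fun S : Submodule R V ↦ Module.rank R S :=
  fun S T ↦ (Submodule.rank_sup_add_rank_inf_eq S T).le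

variable {R V}

theorem statement15_general [HasRankNullity.{v} R] (A B C D : Submodule R V) :
    Module.rank R A + Module.rank R B + Module.rank R ↥(C ⊔ D)
      + Module.rank R ↥(A ⊔ B ⊔ C) + Module.rank R ↥(A ⊔ B ⊔ D)
    ≤ Module.rank R ↥(A ⊔ C) + Module.rank R ↥(A ⊔ D)
      + Module.rank R ↥(B ⊔ C) + Module.rank R ↥(B ⊔ D)
      + Module.rank R ↥(A ⊔ B) :=
  (isSubmodular_rank R V).ingleton_of_common_lower_bound (fun _ _ ↦ Submodule.rank_mono)
    inf_le_left inf_le_right (Submodule.rank_sup_add_rank_inf_eq A B).ge C D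

end Rank

/-- Ingleton inequality for subspaces: for any four subspaces
`A, B, C, D` of a finite-dimensional vector space over a field,
`dim A + dim B + dim(C+D) + dim(A+B+C) + dim(A+B+D)
  ≤ dim(A+C) + dim(A+D) + dim(B+C) + dim(B+D) + dim(A+B)`,
where `⊔` is the sum (join) of subspaces.  (In entropy form, for the linear random
variables associated with these subspaces this reads
`I(A;B) ≤ I(A;B|C) + I(A;B|D) + I(C;D)`.) -/
theorem statement15 {K V : Type*} [Field K] [AddCommGroup V] [Module K V]
    [FiniteDimensional K V] (A B C D : Submodule K V) :
    Module.finrank K A + Module.finrank K B + Module.finrank K ↥(C ⊔ D)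
      + Module.finrank K ↥(A ⊔ B ⊔ C) + Module.finrank K ↥(A ⊔ B ⊔ D)
    ≤ Module.finrank K ↥(A ⊔ C) + Module.finrank K ↥(A ⊔ D)
      + Module.finrank K ↥(B ⊔ C) + Module.finrank K ↥(B ⊔ D)
      + Module.finrank K ↥(A ⊔ B) := by
  have ingleton_rank := statement15_general A B C D
  simp only [← Module.finrank_eq_rank] at ingleton_rank
  exact_mod_cast ingleton_rank
end

section
/- There exists p ∈ (0,1) such that the pair (ᾱ(p), β̄(p)) lies strictly below the straight line segment joining (1/4 + (3/4)·log₂ 3, 3/4) and (1, 1); explicitly, there exists p ∈ (0,1) with ᾱ(p) + 3·log₂(3/2)·β̄(p) < 1 + 3·log₂(3/2), where ᾱ(p) = 9/4 − H(1/4, 3/4) + (1/4)·H((1−p)/2, (1−p)/2, p/2, p/2) + (1/2)·H((2−p)/4, (2−p)/4, p/2) − (3/4)·H((3−2p)/6, (3−2p)/6, p/3, p/3) and β̄(p) = 5/8 + (1/4)·H((2−p)/4, (2−p)/4, p/2) − (1/8)·H((1−p)/2, (1−p)/2, p). Hence the achievable tradeoff strictly improves upon space-sharing between the two extreme points. -/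
open scoped BigOperators

namespace PIR

/-- The entropy function `H(p₁,…,p_t) = Σᵢ −pᵢ·log₂ pᵢ` of a probability vector
(with the convention `0·log₂ 0 = 0`, which holds since `Real.logb 2 0 = 0`). -/
noncomputable def hent (l : List ℝ) : ℝ := (l.map fun x => -(x * Real.logb 2 x)).sum

/-- The storage rate `ᾱ(p)` of Corollary 2. -/
noncomputable def alphaCurve (p : ℝ) : ℝ :=
  9/4 - hent [1/4, 3/4] + (1/4) * hent [(1-p)/2, (1-p)/2, p/2, p/2]
    + (1/2) * hent [(2-p)/4, (2-p)/4, p/2]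
    - (3/4) * hent [(3-2*p)/6, (3-2*p)/6, p/3, p/3]

/-- The retrieval rate `β̄(p)` of Corollary 2. -/
noncomputable def betaCurve (p : ℝ) : ℝ :=
  5/8 + (1/4) * hent [(2-p)/4, (2-p)/4, p/2] - (1/8) * hent [(1-p)/2, (1-p)/2, p]

/-!
At `p = 1/2` every probability occurring in the two curves is a quotient of products of powers of
`2` and `3`, so both rates are affine in `L = log₂ 3`. Multiplied by `16`, the gap below the segment
is the quadratic `9L² - 9L - 8`, which is positive because `L > 11/7`, i.e. because `2¹¹ < 3⁷`.
-/

lemma logb_base_pow {b : ℝ} (hb : 0 < b) (hb' : b ≠ 1) (n : ℕ) : Real.logb b (b ^ n) = n := by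
  rw [← Real.rpow_natCast, Real.logb_rpow hb hb']

lemma div_lt_logb_of_pow_lt_pow {b x : ℝ} (hb : 1 < b) {m n : ℕ} (h : b ^ m < x ^ n) :
    (m / n : ℝ) < Real.logb b x := by
  have hb₀ : 0 < b := one_pos.trans hb
  have hn : 0 < n := Nat.pos_of_ne_zero <| by
    rintro rfl
    exact (one_le_pow₀ hb.le).not_gt (pow_zero x ▸ h)
  rw [div_lt_iff₀' (Nat.cast_pos.mpr hn), ← Real.logb_pow, ← logb_base_pow hb₀ hb.ne' m]
  exact Real.logb_lt_logb hb (pow_pos hb₀ m) h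

lemma eleven_sevenths_lt_logb_two_three : 11 / 7 < Real.logb 2 3 := by
  exact_mod_cast div_lt_logb_of_pow_lt_pow one_lt_two (show (2 : ℝ) ^ 11 < 3 ^ 7 by norm_num)

lemma logb_two_four : Real.logb 2 4 = 2 := by
  rw [show (4 : ℝ) = 2 ^ 2 by norm_num, logb_base_pow two_pos one_lt_two.ne', Nat.cast_ofNat]

lemma logb_two_eight : Real.logb 2 8 = 3 := by
  rw [show (8 : ℝ) = 2 ^ 3 by norm_num, logb_base_pow two_pos one_lt_two.ne', Nat.cast_ofNat]

lemma logb_two_six : Real.logb 2 6 = 1 + Real.logb 2 3 := by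
  rw [show (6 : ℝ) = 2 * 3 by norm_num, Real.logb_mul two_ne_zero three_ne_zero,
    Real.logb_self_eq_one one_lt_two]

lemma logb_two_three_halves : Real.logb 2 (3 / 2) = Real.logb 2 3 - 1 := by
  rw [Real.logb_div three_ne_zero two_ne_zero, Real.logb_self_eq_one one_lt_two]

lemma hent_nil : hent [] = 0 := rfl

lemma hent_cons (x : ℝ) (l : List ℝ) : hent (x :: l) = -(x * Real.logb 2 x) + hent l := by
  simp only [hent, List.map_cons, List.sum_cons]

lemma hent_map_div (l : List ℝ) {c : ℝ} (hc : c ≠ 0) :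
    hent (l.map (· / c)) = (hent l + l.sum * Real.logb 2 c) / c := by
  induction l with
  | nil => simp [hent_nil]
  | cons x l ih =>
    have hx : x / c * Real.logb 2 (x / c) = x / c * (Real.logb 2 x - Real.logb 2 c) := by
      obtain rfl | hx := eq_or_ne x 0
      · simp
      · rw [Real.logb_div hx hc]
    rw [List.map_cons, hent_cons, hent_cons, List.sum_cons, ih, hx]
    ring

lemma hent_one_fourth_three_fourths :
    hent [1 / 4, 3 / 4] = 2 - 3 / 4 * Real.logb 2 3 := by
  calc hent [1 / 4, 3 / 4]
      = hent ([1, 3].map (· / 4)) := by norm_num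
    _ = (hent [1, 3] + List.sum [1, 3] * Real.logb 2 4) / 4 := hent_map_div _ four_ne_zero
    _ = 2 - 3 / 4 * Real.logb 2 3 := by
      simp only [hent_cons, hent_nil, List.sum_cons, List.sum_nil, Real.logb_one, logb_two_four]
      ring

lemma hent_replicate_inv (n : ℕ) : hent (List.replicate n (n : ℝ)⁻¹) = Real.logb 2 n := by
  obtain rfl | hn := eq_or_ne n 0
  · simp [hent_nil]
  · simp [hent, hn]

lemma hent_uniform_four : hent [1 / 4, 1 / 4, 1 / 4, 1 / 4] = 2 := by
  simpa [List.replicate, logb_two_four] using hent_replicate_inv 4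

lemma hent_one_fourth_one_fourth_one_half :
    hent [1 / 4, 1 / 4, 1 / 2] = 3 / 2 := by
  calc hent [1 / 4, 1 / 4, 1 / 2]
      = hent ([1, 1, 2].map (· / 4)) := by norm_num
    _ = (hent [1, 1, 2] + List.sum [1, 1, 2] * Real.logb 2 4) / 4 := hent_map_div _ four_ne_zero
    _ = 3 / 2 := by
      simp only [hent_cons, hent_nil, List.sum_cons, List.sum_nil,
        Real.logb_one, Real.logb_self_eq_one one_lt_two, logb_two_four]
      ring

lemma hent_three_eighths_three_eighths_one_fourth :
    hent [3 / 8, 3 / 8, 1 / 4] = 11 / 4 - 3 / 4 * Real.logb 2 3 := by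
  calc hent [3 / 8, 3 / 8, 1 / 4]
      = hent ([3, 3, 2].map (· / 8)) := by norm_num
    _ = (hent [3, 3, 2] + List.sum [3, 3, 2] * Real.logb 2 8) / 8 := hent_map_div _ (by norm_num)
    _ = 11 / 4 - 3 / 4 * Real.logb 2 3 := by
      simp only [hent_cons, hent_nil, List.sum_cons, List.sum_nil,
        Real.logb_self_eq_one one_lt_two, logb_two_eight]
      ring

lemma hent_one_third_one_third_one_sixth_one_sixth :
    hent [1 / 3, 1 / 3, 1 / 6, 1 / 6] = 1 / 3 + Real.logb 2 3 := by
  calc hent [1 / 3, 1 / 3, 1 / 6, 1 / 6]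
      = hent ([2, 2, 1, 1].map (· / 6)) := by norm_num
    _ = (hent [2, 2, 1, 1] + List.sum [2, 2, 1, 1] * Real.logb 2 6) / 6 :=
      hent_map_div _ (by norm_num)
    _ = 1 / 3 + Real.logb 2 3 := by
      simp only [hent_cons, hent_nil, List.sum_cons, List.sum_nil,
        Real.logb_one, Real.logb_self_eq_one one_lt_two, logb_two_six]
      ring

lemma alphaCurve_one_half : alphaCurve (1 / 2) = (15 - 3 * Real.logb 2 3) / 8 := by
  calc alphaCurve (1 / 2)
      = 9 / 4 - hent [1 / 4, 3 / 4] + 1 / 4 * hent [1 / 4, 1 / 4, 1 / 4, 1 / 4]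
          + 1 / 2 * hent [3 / 8, 3 / 8, 1 / 4]
          - 3 / 4 * hent [1 / 3, 1 / 3, 1 / 6, 1 / 6] := by norm_num [alphaCurve]
    _ = (15 - 3 * Real.logb 2 3) / 8 := by
      rw [hent_one_fourth_three_fourths, hent_uniform_four,
        hent_three_eighths_three_eighths_one_fourth, hent_one_third_one_third_one_sixth_one_sixth]
      ring

lemma betaCurve_one_half : betaCurve (1 / 2) = (18 - 3 * Real.logb 2 3) / 16 := by
  calc betaCurve (1 / 2)
      = 5 / 8 + 1 / 4 * hent [3 / 8, 3 / 8, 1 / 4] - 1 / 8 * hent [1 / 4, 1 / 4, 1 / 2] := by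
        norm_num [betaCurve]
    _ = (18 - 3 * Real.logb 2 3) / 16 := by
      rw [hent_three_eighths_three_eighths_one_fourth, hent_one_fourth_one_fourth_one_half]
      ring

lemma segment_gap_one_half :
    1 + 3 * Real.logb 2 (3 / 2)
        - (alphaCurve (1 / 2) + 3 * Real.logb 2 (3 / 2) * betaCurve (1 / 2))
      = (9 * (Real.logb 2 3 * (Real.logb 2 3 - 1)) - 8) / 16 := by
  rw [alphaCurve_one_half, betaCurve_one_half, logb_two_three_halves]
  ring

/-- There exists `p ∈ (0,1)` such that `(ᾱ(p), β̄(p))` lies strictly below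
the line segment joining `(1/4 + (3/4)·log₂ 3, 3/4)` and `(1,1)`:
`ᾱ(p) + 3·log₂(3/2)·β̄(p) < 1 + 3·log₂(3/2)`.  Hence the achievable tradeoff strictly
improves upon space-sharing between the two extreme points. -/
theorem statement19 :
    ∃ p ∈ Set.Ioo (0:ℝ) 1,
      alphaCurve p + 3 * Real.logb 2 (3/2) * betaCurve p < 1 + 3 * Real.logb 2 (3/2) := by
  have hL : 11 / 7 * (4 / 7) < Real.logb 2 3 * (Real.logb 2 3 - 1) := by
    have h := eleven_sevenths_lt_logb_two_three
    gcongr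
    linarith
  refine ⟨1 / 2, by norm_num, ?_⟩
  linarith [segment_gap_one_half]

end PIR
end
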